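/- Let K, T ⊂ ℝ^{2n} be convex bodies, x, y ∈ ℝ^{2n}, and 0 ≤ λ ≤ 1. If K ∩ (x+T) and K ∩ (y+T) have nonempty interiors, then λ·c(K ∩ (x+T))^{1/2} + (1−λ)·c(K ∩ (y+T))^{1/2} ≤ c(K ∩ (λx + (1−λ)y + T))^{1/2}. -/

import Mathlib

open MeasureTheory Real Set Filter intervalIntegral Metric
open scoped InnerProductSpace Topology Pointwise

noncomputable section

/-- The phase space `ℝ^{2n}`. -/
abbrev E (n : ℕ) := EuclideanSpace ℝ (Fin (2 * n))

/-- The standard complex structure `J` on `ℝ^{2n}`, given in coordinates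
`(x₁,y₁,…,xₙ,yₙ)` by `J(x₁,y₁,…,xₙ,yₙ) = (−y₁,x₁,…,−yₙ,xₙ)`. -/
def Jmap (n : ℕ) (v : E n) : E n := WithLp.toLp 2 fun i =>
  if _h : i.val % 2 = 0 then -v ⟨i.val + 1, by have := i.isLt; omega⟩
  else v ⟨i.val - 1, by have := i.isLt; omega⟩

/-- The support function `h_K(u) = sup_{x ∈ K} ⟨x, u⟩`. -/
def suppFn (n : ℕ) (K : Set (E n)) (u : E n) : ℝ :=
  sSup ((fun x => ⟪x, u⟫_ℝ) '' K)

/-- A convex body: a compact convex set with nonempty interior. -/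
def IsConvexBody (n : ℕ) (K : Set (E n)) : Prop :=
  IsCompact K ∧ Convex ℝ K ∧ (interior K).Nonempty

/-- Membership in the loop space `𝓔_p`: the pair `(z, dz)` represents an absolutely
continuous `2π`-periodic loop `z` with derivative `dz ∈ L^p([0,2π])`, mean zero and
normalized action `(1/2)∫₀^{2π} ⟨J z, ż⟩ = 1`. -/
def InE (n : ℕ) (p : ℝ) (z dz : ℝ → E n) : Prop :=
  Function.Periodic z (2 * π) ∧
  (∀ a b : ℝ, IntervalIntegrable dz volume a b) ∧
  (∀ t, z t = z 0 + ∫ s in (0:ℝ)..t, dz s) ∧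
  MemLp dz (ENNReal.ofReal p) (volume.restrict (Set.Ioc (0:ℝ) (2 * π))) ∧
  (∫ t in (0:ℝ)..(2 * π), z t) = 0 ∧
  (1 / 2) * ∫ t in (0:ℝ)..(2 * π), ⟪Jmap n (z t), dz t⟫_ℝ = 1

/-- The (Ekeland–Hofer–Zehnder) capacity of a convex body,
`c(S) = (π · inf_{z ∈ 𝓔₂} (1/2π) ∫₀^{2π} h_S(ż(t)) dt)²`. -/
def capacity (n : ℕ) (S : Set (E n)) : ℝ :=
  (π * sInf { r : ℝ | ∃ z dz : ℝ → E n, InE n 2 z dz ∧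
      r = (1 / (2 * π)) * ∫ t in (0:ℝ)..(2 * π), suppFn n S (dz t) }) ^ 2

/-- The action `𝒜(γ) = (1/2) ∫₀^{T₀} ⟨−Jγ̇(t), γ(t)⟩ dt` of a `T₀`-periodic curve. -/
def action (n : ℕ) (γ : ℝ → E n) (T₀ : ℝ) : ℝ :=
  (1 / 2) * ∫ t in (0:ℝ)..T₀, ⟪-Jmap n (deriv γ t), γ t⟫_ℝ

/-- A closed characteristic on `∂K`: a nonconstant `T₀`-periodic `C¹` curve lying on
`∂K` satisfying `γ̇ = d·J∇F(γ)` for some `d > 0`, where `F = ‖·‖_K²`. -/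
def IsClosedCharacteristic (n : ℕ) (K : Set (E n)) (γ : ℝ → E n) (T₀ : ℝ) : Prop :=
  0 < T₀ ∧ Function.Periodic γ T₀ ∧ ContDiff ℝ 1 γ ∧ (∃ s t, γ s ≠ γ t) ∧
  (∀ t, γ t ∈ frontier K) ∧
  ∃ d : ℝ, 0 < d ∧ ∀ t, deriv γ t = d • Jmap n (gradient (fun x => gauge K x ^ 2) (γ t))

/-- A capacity carrier of `K`: a closed characteristic on `∂K` of minimal action. -/
def IsCapacityCarrier (n : ℕ) (K : Set (E n)) (γ : ℝ → E n) (T₀ : ℝ) : Prop :=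
  IsClosedCharacteristic n K γ T₀ ∧
  ∀ γ' T₀', IsClosedCharacteristic n K γ' T₀' → action n γ T₀ ≤ action n γ' T₀'

/-- The minimal action of a closed characteristic on `∂K`. -/
def minAction (n : ℕ) (K : Set (E n)) : ℝ :=
  sInf { a : ℝ | ∃ γ T₀, IsClosedCharacteristic n K γ T₀ ∧ a = action n γ T₀ }

/-- `K` has smooth boundary: its gauge function is `C¹` away from the origin. -/
def HasSmoothBoundary (n : ℕ) (K : Set (E n)) : Prop :=
  ContDiffOn ℝ 1 (gauge K) {(0 : E n)}ᶜ

/-- The `p`-sum `K +ₚ T` of Firey: the convex body with support function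
`(h_K^p + h_T^p)^{1/p}`. -/
def pSum (n : ℕ) (p : ℝ) (K T : Set (E n)) : Set (E n) :=
  { x | ∀ u, ⟪x, u⟫_ℝ ≤ (suppFn n K u ^ p + suppFn n T u ^ p) ^ (1 / p) }

/-- The polar body `T° = {x : ⟨x,y⟩ ≤ 1 for all y ∈ T}`. -/
def polarBody (n : ℕ) (T : Set (E n)) : Set (E n) :=
  { x | ∀ y ∈ T, ⟪x, y⟫_ℝ ≤ 1 }

/-- The length `∫₀^{T₀} ‖γ̇(t)‖_B dt` of a curve measured with the gauge of `B`. -/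
def lengthIn (n : ℕ) (B : Set (E n)) (γ : ℝ → E n) (T₀ : ℝ) : ℝ :=
  ∫ t in (0:ℝ)..T₀, gauge B (deriv γ t)

/-- Critical point of the functional `I_p(z) = ∫₀^{2π} h_K^p(ż(t)) dt` on `𝓔_p`. -/
def IsCriticalPoint (n : ℕ) (p : ℝ) (K : Set (E n)) (z dz : ℝ → E n) : Prop :=
  ∀ ξ dξ : ℝ → E n,
    Function.Periodic ξ (2 * π) →
    (∀ a b : ℝ, IntervalIntegrable dξ volume a b) →
    (∀ t, ξ t = ξ 0 + ∫ s in (0:ℝ)..t, dξ s) →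
    MemLp dξ (ENNReal.ofReal p) (volume.restrict (Set.Ioc (0:ℝ) (2 * π))) →
    (∫ t in (0:ℝ)..(2 * π), ξ t) = 0 →
    (∫ t in (0:ℝ)..(2 * π), ⟪ξ t, Jmap n (dz t)⟫_ℝ) = 0 →
    (∫ t in (0:ℝ)..(2 * π), ⟪gradient (fun u => suppFn n K u ^ p) (dz t), dξ t⟫_ℝ) = 0

/-- The rotation-invariant probability measure on the unit sphere of `ℝ^{2n}`. -/
def sphereMeasure (n : ℕ) : Measure (sphere (0 : E n) 1) :=
  ((volume : Measure (E n)).toSphere Set.univ)⁻¹ • (volume : Measure (E n)).toSphere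

/-- The mean width parameter `M*(K) = ∫_{S^{2n-1}} h_K dσ`. -/
def meanWidth (n : ℕ) (K : Set (E n)) : ℝ :=
  ∫ x : sphere (0 : E n) 1, suppFn n K (x : E n) ∂(sphereMeasure n)

lemma suppFn_bdd (n : ℕ) {S : Set (E n)} (hS : IsCompact S) (u : E n) :
    BddAbove ((fun x => ⟪x, u⟫_ℝ) '' S) :=
  (hS.image (by fun_prop)).bddAbove

lemma le_suppFn (n : ℕ) {S : Set (E n)} (hS : IsCompact S) (u : E n) {x : E n} (hx : x ∈ S) :
    ⟪x, u⟫_ℝ ≤ suppFn n S u :=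
  le_csSup (suppFn_bdd n hS u) ⟨x, hx, rfl⟩

lemma suppFn_le (n : ℕ) {S : Set (E n)} (hne : S.Nonempty) (u : E n) {r : ℝ}
    (h : ∀ x ∈ S, ⟪x, u⟫_ℝ ≤ r) : suppFn n S u ≤ r := by
  apply csSup_le (hne.image _)
  rintro _ ⟨x, hx, rfl⟩
  exact h x hx

lemma suppFn_lipschitz (n : ℕ) {S : Set (E n)} (hS : IsCompact S) (hne : S.Nonempty) :
    ∃ C : NNReal, LipschitzWith C (suppFn n S) := by
  obtain ⟨C, hC⟩ := hS.isBounded.exists_norm_le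
  have hC0 : 0 ≤ C := by
    obtain ⟨s, hs⟩ := hne
    exact (norm_nonneg s).trans (hC s hs)
  refine ⟨⟨C, hC0⟩, LipschitzWith.of_le_add_mul _ ?_⟩
  intro u v
  apply suppFn_le n hne
  intro x hx
  have h1 := le_suppFn n hS v hx
  have h2 : ⟪x, u - v⟫_ℝ ≤ C * ‖u - v‖ :=
    (real_inner_le_norm _ _).trans (mul_le_mul_of_nonneg_right (hC x hx) (norm_nonneg _))
  rw [inner_sub_right] at h2
  rw [dist_eq_norm]
  change _ ≤ _ + C * _
  linarith

lemma suppFn_integrable (n : ℕ) {S : Set (E n)} (hS : IsCompact S) (hne : S.Nonempty)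
    {dz : ℝ → E n} (h : IntervalIntegrable dz volume 0 (2 * π)) :
    IntervalIntegrable (fun t => suppFn n S (dz t)) volume 0 (2 * π) := by
  obtain ⟨C, hC⟩ := suppFn_lipschitz n hS hne
  have h0 : suppFn n S 0 = 0 := by
    simp [suppFn, hne.image_const]
  have key : ∀ u, ‖suppFn n S u‖ ≤ C * ‖u‖ := by
    intro u
    have := hC.dist_le_mul u 0
    simpa [h0] using this
  refine (h.norm.const_mul (C : ℝ)).mono_fun ?_ ?_
  · exact hC.continuous.comp_aestronglyMeasurable h.def'.aestronglyMeasurable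
  · filter_upwards with t
    refine (key _).trans (le_abs_self _)

lemma integral_suppFn_nonneg (n : ℕ) {S : Set (E n)} (hS : IsCompact S) (hne : S.Nonempty)
    {z dz : ℝ → E n} (h : InE n 2 z dz) :
    0 ≤ ∫ t in (0:ℝ)..(2 * π), suppFn n S (dz t) := by
  obtain ⟨hp, hi, hz, -⟩ := h
  obtain ⟨s, hs⟩ := hne
  have h0 : ∫ t in (0:ℝ)..(2 * π), dz t = 0 := by
    have h1 := hz (2 * π)
    have h2 := hp 0
    rw [zero_add] at h2
    rw [h2] at h1
    exact left_eq_add.mp h1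
  have hInner : IntervalIntegrable (fun t => ⟪s, dz t⟫_ℝ) volume 0 (2 * π) :=
    ⟨(hi 0 (2 * π)).1.const_inner s, (hi 0 (2 * π)).2.const_inner s⟩
  have h3 : ∫ t in (0:ℝ)..(2 * π), ⟪s, dz t⟫_ℝ = 0 := by
    have := (innerSL ℝ s).intervalIntegral_comp_comm (hi 0 (2 * π))
    simpa [h0] using this
  refine h3.symm.le.trans ?_
  apply intervalIntegral.integral_mono_on (by positivity) hInner
    (suppFn_integrable n hS ⟨s, hs⟩ (hi _ _))
  intro t _
  exact le_suppFn n hS _ hs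

/-- The set whose infimum defines the capacity. -/
def capSet (n : ℕ) (S : Set (E n)) : Set ℝ :=
  { r : ℝ | ∃ z dz : ℝ → E n, InE n 2 z dz ∧
      r = (1 / (2 * π)) * ∫ t in (0:ℝ)..(2 * π), suppFn n S (dz t) }

lemma capSet_nonneg (n : ℕ) {S : Set (E n)} (hS : IsCompact S) (hne : S.Nonempty) :
    ∀ r ∈ capSet n S, 0 ≤ r := by
  rintro r ⟨z, dz, h, rfl⟩
  exact mul_nonneg (by positivity) (integral_suppFn_nonneg n hS hne h)

lemma sqrt_capacity (n : ℕ) {S : Set (E n)} (hS : IsCompact S) (hne : S.Nonempty) :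
    Real.sqrt (capacity n S) = π * sInf (capSet n S) :=
  Real.sqrt_sq (mul_nonneg pi_pos.le (Real.sInf_nonneg (capSet_nonneg n hS hne)))

lemma sqrt_capacity_concave (n : ℕ) {A B C : Set (E n)} (hA : IsCompact A) (hB : IsCompact B)
    (hC : IsCompact C) (hA0 : A.Nonempty) (hB0 : B.Nonempty) {lam : ℝ} (hlam0 : 0 ≤ lam)
    (hlam1 : lam ≤ 1) (hABC : ∀ a ∈ A, ∀ b ∈ B, lam • a + (1 - lam) • b ∈ C) :
    lam * Real.sqrt (capacity n A) + (1 - lam) * Real.sqrt (capacity n B) ≤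
      Real.sqrt (capacity n C) := by
  have hC0 : C.Nonempty := by
    obtain ⟨a, ha⟩ := hA0
    obtain ⟨b, hb⟩ := hB0
    exact ⟨_, hABC a ha b hb⟩
  have hl : 0 ≤ 1 - lam := by linarith
  rw [sqrt_capacity n hA hA0, sqrt_capacity n hB hB0, sqrt_capacity n hC hC0]
  suffices h : lam * sInf (capSet n A) + (1 - lam) * sInf (capSet n B) ≤ sInf (capSet n C) by
    have := mul_le_mul_of_nonneg_left h pi_pos.le
    linarith
  by_cases hE : ∃ z dz, InE n 2 z dz
  · obtain ⟨z₀, dz₀, h₀⟩ := hE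
    have hCne : (capSet n C).Nonempty := ⟨_, z₀, dz₀, h₀, rfl⟩
    apply le_csInf hCne
    rintro r ⟨z, dz, h, rfl⟩
    have hi := h.2.1 0 (2 * π)
    have h1 : sInf (capSet n A) ≤ (1 / (2 * π)) * ∫ t in (0:ℝ)..(2 * π), suppFn n A (dz t) :=
      csInf_le ⟨0, fun r hr => capSet_nonneg n hA hA0 r hr⟩ ⟨z, dz, h, rfl⟩
    have h2 : sInf (capSet n B) ≤ (1 / (2 * π)) * ∫ t in (0:ℝ)..(2 * π), suppFn n B (dz t) :=
      csInf_le ⟨0, fun r hr => capSet_nonneg n hB hB0 r hr⟩ ⟨z, dz, h, rfl⟩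
    have hpt : ∀ u, lam * suppFn n A u + (1 - lam) * suppFn n B u ≤ suppFn n C u := by
      intro u
      obtain ⟨a, ha, hau⟩ := hA.exists_sSup_image_eq hA0
        (f := fun x => ⟪x, u⟫_ℝ) (by fun_prop)
      obtain ⟨b, hb, hbu⟩ := hB.exists_sSup_image_eq hB0
        (f := fun x => ⟪x, u⟫_ℝ) (by fun_prop)
      have := le_suppFn n hC u (hABC a ha b hb)
      rw [inner_add_left, real_inner_smul_left, real_inner_smul_left] at this
      unfold suppFn at this ⊢
      rw [hau, hbu]
      exact this
    have hIA := suppFn_integrable n hA hA0 hi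
    have hIB := suppFn_integrable n hB hB0 hi
    have hIC := suppFn_integrable n hC hC0 hi
    have h3 : lam * (∫ t in (0:ℝ)..(2 * π), suppFn n A (dz t)) +
        (1 - lam) * (∫ t in (0:ℝ)..(2 * π), suppFn n B (dz t)) ≤
        ∫ t in (0:ℝ)..(2 * π), suppFn n C (dz t) := by
      rw [← intervalIntegral.integral_const_mul, ← intervalIntegral.integral_const_mul,
        ← intervalIntegral.integral_add (hIA.const_mul _) (hIB.const_mul _)]
      exact intervalIntegral.integral_mono_on (by positivity)
        ((hIA.const_mul _).add (hIB.const_mul _)) hIC (fun t _ => hpt _)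
    have h4 := mul_le_mul_of_nonneg_left h3 (show 0 ≤ 1 / (2 * π) by positivity)
    have h5 := mul_le_mul_of_nonneg_left h1 hlam0
    have h6 := mul_le_mul_of_nonneg_left h2 hl
    linarith
  · have : ∀ S, capSet n S = ∅ := by
      intro S
      ext r
      simp only [mem_empty_iff_false, iff_false]
      rintro ⟨z, dz, h, -⟩
      exact hE ⟨z, dz, h⟩
    simp [this]

/-- Concavity of `c^{1/2}` along translations of the intersecting body:
`λ·c(K ∩ (x+T))^{1/2} + (1−λ)·c(K ∩ (y+T))^{1/2} ≤ c(K ∩ (λx+(1−λ)y+T))^{1/2}`. -/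
theorem sqrt_capacity_inter_translate_concave (n : ℕ) (K T : Set (E n))
    (hK : IsConvexBody n K) (hT : IsConvexBody n T)
    (x y : E n) (lam : ℝ) (hlam0 : 0 ≤ lam) (hlam1 : lam ≤ 1)
    (hx : (interior (K ∩ ((fun t => x + t) '' T))).Nonempty)
    (hy : (interior (K ∩ ((fun t => y + t) '' T))).Nonempty) :
    lam * Real.sqrt (capacity n (K ∩ ((fun t => x + t) '' T))) +
        (1 - lam) * Real.sqrt (capacity n (K ∩ ((fun t => y + t) '' T))) ≤
      Real.sqrt (capacity n (K ∩ ((fun t => (lam • x + (1 - lam) • y) + t) '' T))) := by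
  have hc : ∀ w : E n, IsCompact (K ∩ ((fun t => w + t) '' T)) := fun w =>
    hK.1.inter (hT.1.image (by fun_prop))
  refine sqrt_capacity_concave n (hc _) (hc _) (hc _) (hx.mono interior_subset)
    (hy.mono interior_subset) hlam0 hlam1 ?_
  rintro a ⟨haK, t, ht, rfl⟩ b ⟨hbK, s, hs, rfl⟩
  refine ⟨hK.2.1 haK hbK hlam0 (by linarith) (by ring), lam • t + (1 - lam) • s,
    hT.2.1 ht hs hlam0 (by linarith) (by ring), ?_⟩
  simp only [smul_add]
  abel
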